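/- Let λ ∈ ℝ be a root of det φ_{p+1}, P the orthogonal projection onto E = Ker φ_{p+1}(λ), and χ the solution with χ_{p+1} = 0, χ_p = I. Then χ₁(λ) φ_p(λ) P = P. -/

import Mathlib

open Matrix

/-!
Both `n ↦ χ n * φ p * P` and `n ↦ φ n * P` solve the recurrence. They agree at `n = p` because
`χ p = 1`, and at `n = p + 1` because both vanish there. Invertibility of the
coefficient of the lowest term lets the recurrence run downwards, so they also agree at `n = 1`,
where `φ 1 = 1`.
-/

/-- `y` solves, at the sites `1, …, p`, the eigenvalue equation with spectral parameter `z` of the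
tridiagonal operator with diagonal `b`, superdiagonal `a` and subdiagonal `c`. The site is written
`n + 1` to avoid truncated subtraction, so that `c n` couples site `n + 1` to site `n`; the Jacobi
recursion is the case `c n = (a n)ᴴ`. -/
def IsThreeTermSolution {K A : Type*} [Ring A] [SMul K A] (a b c : ℕ → A) (z : K) (p : ℕ)
    (y : ℕ → A) : Prop :=
  ∀ n < p, a (n + 1) * y (n + 2) + b (n + 1) * y (n + 1) + c n * y n = z • y (n + 1)

namespace IsThreeTermSolution

variable {K A : Type*} [Ring A] {a b c : ℕ → A} {z : K} {p : ℕ} {x y : ℕ → A}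

theorem sub [DistribSMul K A] (hx : IsThreeTermSolution a b c z p x)
    (hy : IsThreeTermSolution a b c z p y) :
    IsThreeTermSolution a b c z p (fun n ↦ x n - y n) := by
  intro n hn
  rw [smul_sub, ← hx n hn, ← hy n hn]
  noncomm_ring

theorem mul_const [SMul K A] [IsScalarTower K A A] (hy : IsThreeTermSolution a b c z p y) (d : A) :
    IsThreeTermSolution a b c z p (fun n ↦ y n * d) := by
  intro n hn
  rw [← smul_mul_assoc, ← hy n hn]
  noncomm_ring

theorem eq_zero_of_terminal_eq_zero [SMulZeroClass K A] (hy : IsThreeTermSolution a b c z p y)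
    (hyp : y p = 0) (hyp' : y (p + 1) = 0) {k : ℕ} (hkp : k ≤ p)
    (hc : ∀ n, k ≤ n → n < p → IsLeftRegular (c n)) : y k = 0 := by
  suffices consecutive_zeros : y k = 0 ∧ y (k + 1) = 0 from consecutive_zeros.1
  induction hkp using Nat.decreasingInduction with
  | self => exact ⟨hyp, hyp'⟩
  | of_succ n hn ih =>
    obtain ⟨h₁, h₂⟩ := ih fun j hj ↦ hc j (Nat.le_of_succ_le hj)
    have hcy : c n * y n = 0 := by simpa [h₁, h₂] using hy n hn
    exact ⟨(hc n le_rfl hn).mul_left_eq_zero_iff.mp hcy, h₁⟩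

theorem eq_of_terminal_eq [DistribSMul K A] (hx : IsThreeTermSolution a b c z p x)
    (hy : IsThreeTermSolution a b c z p y) (hp : x p = y p) (hp' : x (p + 1) = y (p + 1))
    {k : ℕ} (hkp : k ≤ p) (hc : ∀ n, k ≤ n → n < p → IsLeftRegular (c n)) : x k = y k :=
  sub_eq_zero.mp <| (hx.sub hy).eq_zero_of_terminal_eq_zero (sub_eq_zero.mpr hp)
    (sub_eq_zero.mpr hp') hkp hc

end IsThreeTermSolution

theorem mul_eq_zero_of_isIdempotentElem_of_mulVec {l m R : Type*} [Fintype m] [Semiring R]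
    {M : Matrix l m R} {P : Matrix m m R} (hP : IsIdempotentElem P)
    (hM : ∀ v, P *ᵥ v = v → M *ᵥ v = 0) : M * P = 0 := by
  classical
  refine Matrix.ext_of_mulVec_single fun i ↦ ?_
  rw [← mulVec_mulVec, zero_mulVec]
  exact hM _ (by rw [mulVec_mulVec, hP.eq])

theorem chi_one_phi_p_eq_proj_general {K A : Type*} [Ring A] [DistribSMul K A]
    [IsScalarTower K A A] {a b c : ℕ → A} {z : K} {p : ℕ} (hp : 1 ≤ p)
    (hc : ∀ n, 1 ≤ n → n < p → IsLeftRegular (c n)) {φ χ : ℕ → A}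
    (hφ : IsThreeTermSolution a b c z p φ) (hφ1 : φ 1 = 1)
    (hχ : IsThreeTermSolution a b c z p χ) (hχp : χ p = 1) (hχp1 : χ (p + 1) = 0)
    {P : A} (hφP : φ (p + 1) * P = 0) : χ 1 * φ p * P = P := by
  have agree_at_one : χ 1 * (φ p * P) = φ 1 * P :=
    (hχ.mul_const (φ p * P)).eq_of_terminal_eq (hφ.mul_const P)
      (by rw [hχp, one_mul]) (by rw [hχp1, zero_mul, hφP]) hp hc
  rw [mul_assoc, agree_at_one, hφ1, one_mul]

/-- For a real root `λ` of `det φ_{p+1}` with orthogonal projection `P` onto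
`E = Ker φ_{p+1}(λ)`, and `χ` the solution with `χ_{p+1} = 0`, `χ_p = I`, one has
`χ₁(λ) φ_p(λ) P = P`. -/
theorem chi_one_phi_p_eq_proj (m p : ℕ) (hp : 1 ≤ p)
    (a b : ℕ → Matrix (Fin m) (Fin m) ℂ)
    (ha0 : a 0 = 1) (hap : a p = 1)
    (hb : ∀ n, 1 ≤ n → n ≤ p → (b n).IsHermitian)
    (haInv : ∀ n, n ≤ p → IsUnit (a n))
    (φ χ : ℕ → ℂ → Matrix (Fin m) (Fin m) ℂ)
    (hφ0 : ∀ z, φ 0 z = 0) (hφ1 : ∀ z, φ 1 z = 1)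
    (hφ : ∀ (z : ℂ) (n : ℕ), 1 ≤ n → n ≤ p →
      a n * φ (n + 1) z + b n * φ n z + (a (n - 1))ᴴ * φ (n - 1) z = z • φ n z)
    (hχp1 : ∀ z, χ (p + 1) z = 0) (hχp : ∀ z, χ p z = 1)
    (hχ : ∀ (z : ℂ) (n : ℕ), 1 ≤ n → n ≤ p →
      a n * χ (n + 1) z + b n * χ n z + (a (n - 1))ᴴ * χ (n - 1) z = z • χ n z)
    (lam : ℝ) (hroot : (φ (p + 1) (lam : ℂ)).det = 0)
    (P : Matrix (Fin m) (Fin m) ℂ)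
    (hPherm : Pᴴ = P) (hPidem : P * P = P)
    (hPker : ∀ h : Fin m → ℂ, φ (p + 1) (lam : ℂ) *ᵥ h = 0 ↔ P *ᵥ h = h) :
    χ 1 (lam : ℂ) * φ p (lam : ℂ) * P = P := by
  have hφP : φ (p + 1) (lam : ℂ) * P = 0 :=
    mul_eq_zero_of_isIdempotentElem_of_mulVec hPidem fun h ↦ (hPker h).mpr
  exact chi_one_phi_p_eq_proj_general (φ := (φ · lam)) (χ := (χ · lam)) (c := fun n ↦ (a n)ᴴ) hp
    (fun n _ hn ↦ (haInv n hn.le).star.isRegular.left)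
    (fun n hn ↦ hφ lam (n + 1) n.succ_pos hn) (hφ1 lam)
    (fun n hn ↦ hχ lam (n + 1) n.succ_pos hn) (hχp lam) (hχp1 lam) hφP
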